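/- Mayordomo's theorem: For every A ∈ 2^ω, the effective Hausdorff dimension of A satisfies dim(A) = liminf_{n→∞} K(A↾n)/n = liminf_{n→∞} C(A↾n)/n. -/

import Mathlib

open scoped ENNReal NNReal Classical

namespace AR

/-- Elements of Cantor space `2^ω`: infinite binary sequences. -/
abbrev Seq := ℕ → Bool

/-- Finite binary strings `2^{<ω}`. -/
abbrev Str := List Bool

/-- The first `n` bits of a sequence `A`, as a finite string (`A↾n`). -/
def pre (A : Seq) (n : ℕ) : Str := List.ofFn fun i : Fin n => A i

/-- The basic clopen cylinder `[σ]` of all sequences extending `σ`. -/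
def cyl (σ : Str) : Set Seq := {A | pre A σ.length = σ}

/-- A measure on Cantor space is *fair-coin* if every cylinder `[σ]` has measure
`2^{-|σ|}`; this uniquely characterizes the usual product measure `μ` on `2^ω`. -/
def FairCoin (μ : MeasureTheory.Measure Seq) : Prop :=
  ∀ σ : Str, μ (cyl σ) = (2 : ℝ≥0∞)⁻¹ ^ σ.length

/-- A machine is a partial computable function `2^{<ω} ⇀ 2^{<ω}`. -/
def IsMachine (M : Str →. Str) : Prop := Partrec M

/-- Kolmogorov complexity of `τ` relative to the machine `M`:
`C_M(τ) = min{|σ| : M(σ)↓ = τ}`, with value `∞` if no such `σ` exists. -/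
noncomputable def Cplx (M : Str →. Str) (τ : Str) : ℕ∞ :=
  sInf ((fun σ : Str => (σ.length : ℕ∞)) '' {σ | τ ∈ M σ})

/-- A universal machine: a machine simulating every machine up to an additive
constant.  `Cplx U` for universal `U` is plain Kolmogorov complexity `C`. -/
def UniversalMachine (U : Str →. Str) : Prop :=
  IsMachine U ∧ ∀ M : Str →. Str, IsMachine M → ∃ c : ℕ, ∀ τ, Cplx U τ ≤ Cplx M τ + c

/-- A set of strings is prefix-free if none of its elements is a proper initial
segment of another. -/
def PrefixFree (S : Set Str) : Prop :=
  ∀ σ ∈ S, ∀ τ ∈ S, σ <+: τ → σ = τ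

/-- A prefix-free machine: a machine whose domain is prefix-free. -/
def PrefixFreeMachine (M : Str →. Str) : Prop :=
  IsMachine M ∧ PrefixFree {σ | (M σ).Dom}

/-- A universal prefix-free machine.  `Cplx U` for such `U` is prefix-free
Kolmogorov complexity `K`. -/
def UniversalPFMachine (U : Str →. Str) : Prop :=
  PrefixFreeMachine U ∧
    ∀ M : Str →. Str, PrefixFreeMachine M → ∃ c : ℕ, ∀ τ, Cplx U τ ≤ Cplx M τ + c

/-- A c.e. (recursively enumerable) predicate. -/
def CEPred {α} [Primcodable α] (p : α → Prop) : Prop :=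
  Partrec fun a => Part.assert (p a) fun _ => Part.some ()

/-- A Martin-Löf test: a sequence of uniformly Σ⁰₁ classes `U i`, given by a single
c.e. set `W` of pairs, with `μ (U i) ≤ 2^{-i}`. -/
def MLTest (μ : MeasureTheory.Measure Seq) (U : ℕ → Set Seq) : Prop :=
  ∃ W : Set (ℕ × Str), CEPred (· ∈ W) ∧
    (∀ i, U i = ⋃ σ ∈ {σ : Str | (i, σ) ∈ W}, cyl σ) ∧
    ∀ i, μ (U i) ≤ (2 : ℝ≥0∞)⁻¹ ^ i

/-- `A` is Martin-Löf random if it passes every Martin-Löf test. -/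
def MLRandom (μ : MeasureTheory.Measure Seq) (A : Seq) : Prop :=
  ∀ U : ℕ → Set Seq, MLTest μ U → A ∉ ⋂ i, U i

/-- A martingale: a nonnegative function on strings satisfying the fairness
condition `d(σ) = (d(σ0) + d(σ1))/2`. -/
def IsMartingale (d : Str → ℝ≥0) : Prop :=
  ∀ σ : Str, d σ = (d (σ ++ [false]) + d (σ ++ [true])) / 2

/-- An `s`-gale: `d(σ) = 2^{-s} (d(σ0) + d(σ1))`. -/
def IsGale (s : ℝ) (d : Str → ℝ≥0) : Prop :=
  ∀ σ : Str, (d σ : ℝ) = (2 : ℝ) ^ (-s) * ((d (σ ++ [false]) : ℝ) + (d (σ ++ [true]) : ℝ))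

/-- `d` succeeds on `A` if `limsup_n d(A↾n) = ∞`. -/
def Succeeds (d : Str → ℝ≥0) (A : Seq) : Prop :=
  Filter.limsup (fun n => (d (pre A n) : ℝ≥0∞)) Filter.atTop = ⊤

/-- The success set `S[d]` of `d`. -/
def successSet (d : Str → ℝ≥0) : Set Seq := {A | Succeeds d A}

/-- The values of `d` are uniformly left-c.e. reals: there is a computable
`g : 2^{<ω} × ℕ → ℚ`, nondecreasing in the second argument, with
`sup_n g(σ, n) = d(σ)` (i.e. `g(σ, ·) → d(σ)`) for every `σ`.  A martingale
(or `s`-gale) with this property is a c.e. martingale (or c.e. `s`-gale). -/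
def CEValues (d : Str → ℝ≥0) : Prop :=
  ∃ g : Str × ℕ → ℚ, Computable g ∧ (∀ σ, Monotone fun n => g (σ, n)) ∧
    ∀ σ, Filter.Tendsto (fun n => (g (σ, n) : ℝ)) Filter.atTop (nhds (d σ))

/-- The effective Hausdorff dimension of `A ∈ 2^ω`:
`dim(A) = inf{s ∈ ℚ, s ≥ 0 : some c.e. s-gale succeeds on A}` (Lutz).  (For every
rational `s > 1` some computable `s`-gale succeeds on every sequence, so this agrees
with taking the infimum over `s ∈ ℚ ∩ [0,1]` with the convention `inf ∅ = 1`.) -/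
noncomputable def effDim (A : Seq) : ℝ :=
  sInf {s : ℝ | ∃ q : ℚ, 0 ≤ q ∧ (q : ℝ) = s ∧
    ∃ d : Str → ℝ≥0, IsGale (q : ℝ) d ∧ CEValues d ∧ Succeeds d A}

/-!
Complexity bounds dimension from above: give each program `p` of a machine `M` the weight
`2 ^ (-|p|) * (|p| + 1) ^ (-2)` and move it to a point of the cylinder of the output `M(p)`. This
is a finite measure, and multiplying the mass of `[σ]` by `2 ^ (s * |σ|)` gives a c.e. `s`-gale. If
`r < s` and `A↾n` has a program of length at most `r * n` for infinitely many `n`, then the gale is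
at least of the order of `2 ^ ((s - r) * n) / n ^ 2` along these prefixes, hence succeeds on `A`.

Dimension bounds complexity from above: if a c.e. `s`-gale `d` succeeds on `A`, then infinitely
many prefixes of `A` lie in the c.e. set `{σ | 1 < d σ}`. As `d` sums to `2 ^ (s * n) * d []` over
the strings of length `n`, this set has at most `2 ^ (p * k + c)` elements of length in
`[L * k, L * (k + 1))`, where `p = s * L` and `L` is large. A prefix-free machine describes them by
`0ᵏ1w` with `|w| = p * k + c`, which takes about `(s + 1 / L) * n` bits for a string of length `n`.

For the machine `M` that measures complexity, this requires only that `M` simulates prefix-free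
machines, so the same argument covers plain and prefix-free complexity.
-/

section Computability

open Encodable

theorem mem_rfindOpt {α : Type*} {f : ℕ → Option α} {a : α} (hex : ∃ n, f n = some a)
    (huniq : ∀ n b, f n = some b → b = a) : a ∈ Nat.rfindOpt f := by
  obtain ⟨n, hn⟩ := hex
  obtain ⟨b, hb⟩ := Part.dom_iff_mem.1 (Nat.rfindOpt_dom.2 ⟨n, a, hn⟩)
  obtain ⟨m, hm⟩ := Nat.rfindOpt_spec hb
  rwa [← huniq m b hm]

variable {α β γ : Type*} [Primcodable α] [Primcodable β] [Primcodable γ]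

theorem computablePred_and {p q : α → Prop} (hp : ComputablePred p) (hq : ComputablePred q) :
    ComputablePred fun a => p a ∧ q a :=
  ((Primrec.and.to_comp.comp hp.decide hq.decide).of_eq fun _ =>
    (Bool.decide_and _ _).symm).computablePred

theorem computablePred_comp {p : β → Prop} {f : α → β} (hp : ComputablePred p)
    (hf : Computable f) : ComputablePred fun a => p (f a) :=
  (hp.decide.comp hf).computablePred

theorem computablePred_comp₂ {R : β → γ → Prop} {f : α → β} {g : α → γ} (hR : PrimrecRel R)
    (hf : Computable f) (hg : Computable g) : ComputablePred fun a => R (f a) (g a) :=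
  (hR.decide.to_comp.comp hf hg).computablePred

theorem computable_ite {p : α → Prop} [DecidablePred p] {f g : α → β} (hp : ComputablePred p)
    (hf : Computable f) (hg : Computable g) : Computable fun a => if p a then f a else g a :=
  (Computable.cond hp.decide hf hg).of_eq fun a => by by_cases h : p a <;> simp [h]

theorem computable_of_computablePred_graph {f : α → β}
    (hf : ComputablePred fun x : α × β => f x.1 = x.2) : Computable f := by
  have search : Computable₂ fun a n => (decode (α := β) n).bind fun b =>
      if f a = b then some b else none :=
    Computable.option_bind (Computable.decode.comp Computable.snd)
      (computable_ite (computablePred_comp hf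
        ((Computable.fst.comp Computable.fst).pair Computable.snd))
        (Computable.option_some.comp Computable.snd) (Computable.const none)).to₂
  refine (Partrec.rfindOpt search).of_eq_tot fun a =>
    mem_rfindOpt ⟨encode (f a), by simp⟩ fun n b hb => ?_
  obtain ⟨c, -, hc⟩ := Option.bind_eq_some_iff.1 hb
  obtain ⟨h, hcb⟩ := Option.ite_none_right_eq_some.1 hc
  exact (h.trans (Option.some.inj hcb)).symm

theorem computable_count {P : α → ℕ → Prop} [∀ a, DecidablePred (P a)]
    (hP : ComputablePred fun x : α × ℕ => P x.1 x.2) :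
    Computable₂ fun a n => Nat.count (P a) n := by
  have hstep : Computable₂ fun (x : α × ℕ) (y : ℕ × ℕ) => y.2 + if P x.1 y.1 then 1 else 0 :=
    Primrec.nat_add.to_comp.comp (Computable.snd.comp Computable.snd)
      (computable_ite (computablePred_comp hP ((Computable.fst.comp Computable.fst).pair
        (Computable.fst.comp Computable.snd))) (Computable.const 1) (Computable.const 0))
  refine (Computable.nat_rec Computable.snd (Computable.const 0) hstep).of_eq fun ⟨a, n⟩ => ?_
  induction n with
  | zero => rfl
  | succ n ih => exact congrArg (· + _) ih |>.trans (Nat.count_succ _ _).symm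

theorem computable_sum_range {f : α → ℕ → ℕ} (hf : Computable₂ f) :
    Computable₂ fun a n => ∑ i ∈ Finset.range n, f a i := by
  have hstep : Computable₂ fun (x : α × ℕ) (y : ℕ × ℕ) => y.2 + f x.1 y.1 :=
    Primrec.nat_add.to_comp.comp (Computable.snd.comp Computable.snd)
      (hf.comp (Computable.fst.comp Computable.fst) (Computable.fst.comp Computable.snd))
  refine (Computable.nat_rec Computable.snd (Computable.const 0) hstep).of_eq fun ⟨a, n⟩ => ?_
  induction n with
  | zero => rfl
  | succ n ih => exact congrArg (· + _) ih |>.trans (Finset.sum_range_succ _ _).symm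

theorem rePred_exists_nat {P : α → ℕ → Prop} (hP : ComputablePred fun x : α × ℕ => P x.1 x.2) :
    REPred fun a => ∃ n, P a n := by
  have hfind : Partrec fun a => Nat.rfind fun n => Part.some (decide (P a n)) :=
    Partrec.rfind hP.decide.partrec
  refine hfind.dom_re.of_eq fun a => Nat.rfind_dom'.trans ?_
  simp

theorem rePred_exists_mem {f : α →. β} (hf : Partrec f) {p : α → β → Prop}
    (hp : ComputablePred fun x : α × β => p x.1 x.2) : REPred fun a => ∃ b ∈ f a, p a b := by
  have h : Partrec fun a => (f a).bind fun b => Part.assert (p a b) fun _ => Part.some () :=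
    hf.bind hp.to_re
  exact h.dom_re.of_eq fun a => by simp [Part.dom_iff_mem]

theorem exists_monotone_computablePred_of_rePred {P : α → Prop} (hP : REPred P) :
    ∃ R : α → ℕ → Prop, (ComputablePred fun x : α × ℕ => R x.1 x.2) ∧
      (∀ a, Monotone (R a)) ∧ ∀ a, P a ↔ ∃ t, R a t := by
  obtain ⟨c, hc⟩ := Nat.Partrec.Code.exists_code.1 hP
  refine ⟨fun a t => (c.evaln t (encode a)).isSome, ?_, fun a s t hst h => ?_, fun a => ?_⟩
  · have heval : Computable fun x : α × ℕ => (c.evaln x.2 (encode x.1)).isSome :=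
      Primrec.option_isSome.to_comp.comp (Nat.Partrec.Code.primrec_evaln.to_comp.comp
        ((Computable.snd.pair (Computable.const c)).pair
          (Computable.encode.comp Computable.fst)))
    exact (heval.of_eq fun _ => (Bool.decide_coe _).symm).computablePred
  · obtain ⟨x, hx⟩ := Option.isSome_iff_exists.1 h
    exact Option.isSome_iff_exists.2 ⟨x, Nat.Partrec.Code.evaln_mono hst hx⟩
  · have hdom : (c.eval (encode a)).Dom ↔ P a := by
      rw [hc]
      simp [Part.dom_iff_mem]
    rw [← hdom, Part.dom_iff_mem]
    simp only [Nat.Partrec.Code.evaln_complete, Option.mem_def, Option.isSome_iff_exists]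
    exact exists_comm

theorem primrecRel_coprime : PrimrecRel Nat.Coprime := by
  have hdvd : PrimrecRel fun (k : ℕ) (x : ℕ × ℕ) => ¬ (x.1 % k = 0 ∧ x.2 % k = 0) ∨ k = 1 :=
    (((Primrec.eq.comp (Primrec.nat_mod.comp (Primrec.fst.comp Primrec.snd) Primrec.fst)
      (Primrec.const 0)).and
      (Primrec.eq.comp (Primrec.nat_mod.comp (Primrec.snd.comp Primrec.snd) Primrec.fst)
      (Primrec.const 0))).not).or (Primrec.eq.comp Primrec.fst (Primrec.const 1))
  have hrange : Primrec fun x : ℕ × ℕ => List.range (x.1 + x.2 + 1) :=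
    Primrec.list_range.comp (Primrec.succ.comp Primrec.nat_add)
  refine (hdvd.forall_mem_list.comp hrange Primrec.id).of_eq fun ⟨a, b⟩ =>
    ⟨fun h => ?_, fun h k _ => ?_⟩
  · have hle : a.gcd b ≤ a + b := by
      rcases Nat.eq_zero_or_pos a with rfl | ha
      · simp
      · exact (Nat.gcd_le_left b ha).trans (Nat.le_add_right a b)
    exact (h (a.gcd b) (List.mem_range.2 (Nat.lt_succ_of_le hle))).resolve_left
      (not_not_intro ⟨Nat.mod_eq_zero_of_dvd (Nat.gcd_dvd_left a b),
        Nat.mod_eq_zero_of_dvd (Nat.gcd_dvd_right a b)⟩)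
  · exact or_iff_not_imp_left.2 fun hk => Nat.eq_one_of_dvd_coprimes h
      (Nat.dvd_of_mod_eq_zero (not_not.1 hk).1) (Nat.dvd_of_mod_eq_zero (not_not.1 hk).2)

end Computability

section Rationals

open Encodable

theorem encode_ofEncodableOfInfinite {α : Type*} [Encodable α] [Infinite α] (a : α) :
    @encode α (Denumerable.ofEncodableOfInfinite α).toEncodable a =
      Nat.count (· ∈ Set.range (encode : α → ℕ)) (encode a) := by
  change List.countP _ _ = List.countP _ _
  congr!

/-- The standard code of a rational number, namely that of the pair of its numerator and
denominator. The `Primcodable` instance of `ℚ` is obtained from it by enumerating the codes in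
increasing order. -/
def ratCode (q : ℚ) : ℕ := @encode ℚ Rat.instEncodable q

theorem ratCode_eq_pair (q : ℚ) : ratCode q = Nat.pair (encode q.num) q.den := rfl

theorem count_ratCode (q : ℚ) : Nat.count (· ∈ Set.range ratCode) (ratCode q) =
    @encode ℚ Primcodable.toEncodable q :=
  (encode_ofEncodableOfInfinite q).symm

theorem primrec_int_natAbs : Primrec Int.natAbs :=
  (Primrec.nat_div.comp (Primrec.succ.comp Primrec.encode) (Primrec.const 2)).of_eq fun z => by
    cases z with
    | ofNat n => change (2 * n + 1) / 2 = n; omega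
    | negSucc n => change (2 * n + 1 + 1) / 2 = n + 1; omega

theorem primrecPred_int_nonneg : PrimrecPred fun z : ℤ => 0 ≤ z :=
  (Primrec.eq.comp (Primrec.nat_mod.comp Primrec.encode (Primrec.const 2))
    (Primrec.const 0)).of_eq fun z => by
    cases z with
    | ofNat n => change (2 * n) % 2 = 0 ↔ _; simp
    | negSucc n => change (2 * n + 1) % 2 = 0 ↔ _; simp

theorem mem_range_ratCode {m : ℕ} : m ∈ Set.range ratCode ↔
    0 < m.unpair.2 ∧ (Denumerable.ofNat ℤ m.unpair.1).natAbs.Coprime m.unpair.2 := by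
  constructor
  · rintro ⟨q, rfl⟩
    rw [ratCode_eq_pair, Nat.unpair_pair, Denumerable.ofNat_encode]
    exact ⟨q.den_pos, q.reduced⟩
  · rintro ⟨hpos, hcop⟩
    exact ⟨⟨_, _, hpos.ne', hcop⟩, by
      rw [ratCode_eq_pair, Denumerable.encode_ofNat, Nat.pair_unpair]⟩

theorem primrecPred_mem_range_ratCode : PrimrecPred (· ∈ Set.range ratCode) := by
  have hden : Primrec fun m : ℕ => m.unpair.2 := Primrec.snd.comp Primrec.unpair
  have hnum : Primrec fun m : ℕ => (Denumerable.ofNat ℤ m.unpair.1).natAbs :=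
    primrec_int_natAbs.comp ((Primrec.ofNat ℤ).comp (Primrec.fst.comp Primrec.unpair))
  exact ((Primrec.nat_lt.comp (Primrec.const 0) hden).and
    (primrecRel_coprime.comp hnum hden)).of_eq fun _ => mem_range_ratCode.symm

theorem computable_ratCode : Computable ratCode := by
  have hcount : Computable (Nat.count (· ∈ Set.range ratCode)) :=
    (computable_count (α := Unit) (P := fun _ m => m ∈ Set.range ratCode)
      (computablePred_comp primrecPred_mem_range_ratCode.computablePred Computable.snd)).comp
      (Computable.const ()) Computable.id
  refine computable_of_computablePred_graph <| (computablePred_and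
    (computablePred_comp primrecPred_mem_range_ratCode.computablePred Computable.snd)
    (computablePred_comp₂ Primrec.eq (hcount.comp Computable.snd)
      (Computable.encode.comp Computable.fst))).of_eq fun ⟨q, m⟩ => ?_
  constructor
  · rintro ⟨⟨p, rfl⟩, hp⟩
    exact congrArg ratCode (@encode_injective ℚ Primcodable.toEncodable _ _
      ((count_ratCode p).symm.trans hp)).symm
  · intro h
    obtain rfl : ratCode q = m := h
    exact ⟨⟨q, rfl⟩, count_ratCode q⟩

theorem computable_rat_num : Computable Rat.num :=
  ((Primrec.ofNat ℤ).to_comp.comp ((Primrec.fst.comp Primrec.unpair).to_comp.comp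
    computable_ratCode)).of_eq fun q => by
    rw [ratCode_eq_pair, Nat.unpair_pair, Denumerable.ofNat_encode]

theorem computable_rat_den : Computable Rat.den :=
  ((Primrec.snd.comp Primrec.unpair).to_comp.comp computable_ratCode).of_eq fun q => by
    rw [ratCode_eq_pair, Nat.unpair_pair]

theorem computablePred_one_lt_rat : ComputablePred fun q : ℚ => 1 < q := by
  refine (computablePred_and (computablePred_comp primrecPred_int_nonneg.computablePred
    computable_rat_num) (computablePred_comp₂ Primrec.nat_lt computable_rat_den
    (primrec_int_natAbs.to_comp.comp computable_rat_num))).of_eq fun q => ?_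
  rw [Rat.lt_iff, Rat.num_one, Rat.den_one]
  omega

theorem primrec_pow : Primrec₂ ((· ^ ·) : ℕ → ℕ → ℕ) :=
  Primrec₂.unpaired'.1 Nat.Primrec.pow

theorem computable_dyadic_rat : Computable₂ fun m t : ℕ => (m : ℚ) / 2 ^ t := by
  have hnum : Computable fun x : (ℕ × ℕ) × ℚ => x.2.num :=
    computable_rat_num.comp Computable.snd
  have hpow : Computable fun x : (ℕ × ℕ) × ℚ => 2 ^ x.1.2 :=
    primrec_pow.to_comp.comp (Computable.const 2) (Computable.snd.comp Computable.fst)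
  refine computable_of_computablePred_graph <| (computablePred_and
    (computablePred_comp primrecPred_int_nonneg.computablePred hnum)
    (computablePred_comp₂ Primrec.eq
      (Primrec.nat_mul.to_comp.comp (Computable.fst.comp Computable.fst)
        (computable_rat_den.comp Computable.snd))
      (Primrec.nat_mul.to_comp.comp (primrec_int_natAbs.to_comp.comp hnum) hpow))).of_eq
    fun ⟨⟨m, t⟩, q⟩ => ?_
  have hpow0 : (2 : ℚ) ^ t ≠ 0 := by positivity
  have hden0 : (q.den : ℚ) ≠ 0 := by exact_mod_cast q.den_ne_zero
  change 0 ≤ q.num ∧ m * q.den = q.num.natAbs * 2 ^ t ↔ (m : ℚ) / 2 ^ t = q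
  constructor
  · rintro ⟨hnonneg, h⟩
    conv_rhs => rw [← Rat.num_div_den q, ← Int.natAbs_of_nonneg hnonneg]
    rw [div_eq_div_iff hpow0 hden0]
    exact_mod_cast h
  · intro h
    have hnonneg : 0 ≤ q.num := Rat.num_nonneg.2 (h ▸ by positivity)
    refine ⟨hnonneg, ?_⟩
    rw [← Rat.num_div_den q, div_eq_div_iff hpow0 hden0, ← Int.natAbs_of_nonneg hnonneg] at h
    exact_mod_cast h

end Rationals

section LeftCE

open Encodable Filter Topology

variable {α β : Type*} [Primcodable α] [Primcodable β]

/-- `f` takes uniformly left-c.e. values. The approximation at stage `t` has denominator `2 ^ t`,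
so that finite sums of approximations can be formed on numerators. -/
def IsLeftCE (f : α → ℝ≥0) : Prop :=
  ∃ a : α → ℕ → ℕ, Computable₂ a ∧ (∀ x, Monotone fun t => (a x t : ℝ≥0) / 2 ^ t) ∧
    ∀ x, Tendsto (fun t => (a x t : ℝ≥0) / 2 ^ t) atTop (𝓝 (f x))

theorem monotone_floor_mul_two_pow_div {u : ℕ → ℝ≥0} (hu : Monotone u) :
    Monotone fun t => (⌊u t * 2 ^ t⌋₊ : ℝ≥0) / 2 ^ t := by
  refine monotone_nat_of_le_succ fun t => ?_
  have hfloor : ⌊u t * 2 ^ t⌋₊ * 2 ≤ ⌊u (t + 1) * 2 ^ (t + 1)⌋₊ := by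
    refine Nat.le_floor ?_
    calc ((⌊u t * 2 ^ t⌋₊ * 2 : ℕ) : ℝ≥0) ≤ u t * 2 ^ t * 2 := by
          push_cast
          gcongr
          exact Nat.floor_le zero_le
      _ ≤ u (t + 1) * 2 ^ (t + 1) := by
          rw [pow_succ, ← mul_assoc]
          gcongr
          exact hu t.le_succ
  rw [div_le_div_iff₀ (by positivity) (by positivity)]
  calc (⌊u t * 2 ^ t⌋₊ : ℝ≥0) * 2 ^ (t + 1) = (⌊u t * 2 ^ t⌋₊ * 2 : ℕ) * 2 ^ t := by
        push_cast
        ring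
    _ ≤ ⌊u (t + 1) * 2 ^ (t + 1)⌋₊ * 2 ^ t := by gcongr

theorem tendsto_floor_mul_two_pow_div {u : ℕ → ℝ≥0} {x : ℝ≥0} (hu : Tendsto u atTop (𝓝 x)) :
    Tendsto (fun t => (⌊u t * 2 ^ t⌋₊ : ℝ≥0) / 2 ^ t) atTop (𝓝 x) := by
  have herr : Tendsto (fun t : ℕ => u t - (1 / 2) ^ t) atTop (𝓝 (x - 0)) :=
    hu.sub (NNReal.tendsto_pow_atTop_nhds_zero_of_lt_one (by norm_num))
  rw [tsub_zero] at herr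
  refine tendsto_of_tendsto_of_tendsto_of_le_of_le herr hu (fun t => ?_) fun t => ?_
  · have := (Nat.lt_floor_add_one (u t * 2 ^ t)).le
    rw [tsub_le_iff_right, one_div, inv_pow, ← one_div, ← add_div, le_div_iff₀ (by positivity)]
    exact this
  · exact (div_le_iff₀ (by positivity)).2 (Nat.floor_le zero_le)

namespace IsLeftCE

theorem of_floor {f : α → ℝ≥0} {u : α → ℕ → ℝ≥0} (hmono : ∀ x, Monotone (u x))
    (hlim : ∀ x, Tendsto (u x) atTop (𝓝 (f x)))
    (hu : Computable₂ fun x t => ⌊u x t * 2 ^ t⌋₊) : IsLeftCE f :=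
  ⟨_, hu, fun x => monotone_floor_mul_two_pow_div (hmono x),
    fun x => tendsto_floor_mul_two_pow_div (hlim x)⟩

theorem of_fraction {f : α → ℝ≥0} {a b : α → ℕ → ℕ} (ha : Computable₂ a) (hb : Computable₂ b)
    (hmono : ∀ x, Monotone fun t => (a x t : ℝ≥0) / b x t)
    (hlim : ∀ x, Tendsto (fun t => (a x t : ℝ≥0) / b x t) atTop (𝓝 (f x))) : IsLeftCE f := by
  have hpow : Computable fun x : α × ℕ => 2 ^ x.2 :=
    primrec_pow.to_comp.comp (Computable.const 2) Computable.snd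
  refine of_floor hmono hlim ((Primrec.nat_div.to_comp.comp
    (Primrec.nat_mul.to_comp.comp ha hpow) hb).of_eq fun ⟨x, t⟩ => ?_)
  have hcast : ((a x t * 2 ^ t : ℕ) : ℝ≥0) / b x t = a x t / b x t * 2 ^ t := by
    push_cast
    ring
  exact (hcast ▸ Nat.floor_div_eq_div (K := ℝ≥0) (a x t * 2 ^ t) (b x t)).symm

theorem comp {f : β → ℝ≥0} (hf : IsLeftCE f) {g : α → β} (hg : Computable g) :
    IsLeftCE fun x => f (g x) := by
  obtain ⟨a, ha, hmono, hlim⟩ := hf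
  exact ⟨fun x => a (g x), ha.comp (hg.comp Computable.fst) Computable.snd,
    fun x => hmono (g x), fun x => hlim (g x)⟩

theorem mul {f g : α → ℝ≥0} (hf : IsLeftCE f) (hg : IsLeftCE g) :
    IsLeftCE fun x => f x * g x := by
  obtain ⟨a, ha, hamono, halim⟩ := hf
  obtain ⟨b, hb, hbmono, hblim⟩ := hg
  have hpow : Computable₂ fun (_ : α) (t : ℕ) => 4 ^ t :=
    (primrec_pow.to_comp.comp (Computable.const 4) Computable.snd).to₂
  have hprod : ∀ x t, ((a x t * b x t : ℕ) : ℝ≥0) / (4 ^ t : ℕ) =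
      a x t / 2 ^ t * (b x t / 2 ^ t) := fun x t => by
    rw [div_mul_div_comm, ← mul_pow]
    norm_num
  refine of_fraction (Primrec.nat_mul.to_comp.comp₂ ha hb) hpow (fun x => ?_) fun x => ?_
  · simp only [hprod]
    exact (hamono x).mul' (hbmono x)
  · simp only [hprod]
    exact (halim x).mul (hblim x)

theorem inv_of_rePred {P : α → Prop} [DecidablePred P] (hP : REPred P) {w : α → ℕ}
    (hw : Computable w) : IsLeftCE fun x => if P x then (w x : ℝ≥0)⁻¹ else 0 := by
  obtain ⟨R, hR, hRmono, hPR⟩ := exists_monotone_computablePred_of_rePred hP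
  have hmono : ∀ x, Monotone fun t => ((if R x t then 1 else 0 : ℕ) : ℝ≥0) / w x := by
    intro x s t hst
    dsimp only
    gcongr
    have := hRmono x hst
    split_ifs <;> simp_all
  refine of_fraction (computable_ite hR (Computable.const 1) (Computable.const 0)).to₂
    (hw.comp Computable.fst).to₂ hmono fun x => ?_
  refine tendsto_nhds_of_eventually_eq ?_
  split_ifs with h
  · obtain ⟨s, hs⟩ := (hPR x).1 h
    filter_upwards [eventually_ge_atTop s] with t ht
    simp [hRmono x ht hs]
  · filter_upwards with t
    simp [show ¬ R x t from fun ht => h ((hPR x).2 ⟨t, ht⟩)]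

theorem tsum_nat {f : α → ℕ → ℝ≥0} (hf : IsLeftCE fun x : α × ℕ => f x.1 x.2)
    (hsum : ∀ x, Summable (f x)) : IsLeftCE fun x => ∑' i, f x i := by
  obtain ⟨a, ha, hmono, hlim⟩ := hf
  have hle : ∀ x i t, (a (x, i) t : ℝ≥0) / 2 ^ t ≤ f x i := fun x i =>
    (hmono (x, i)).ge_of_tendsto (hlim (x, i))
  have hcast : ∀ x t, ((∑ i ∈ Finset.range t, a (x, i) t : ℕ) : ℝ≥0) / 2 ^ t =
      ∑ i ∈ Finset.range t, (a (x, i) t : ℝ≥0) / 2 ^ t := fun x t => by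
    rw [Nat.cast_sum, Finset.sum_div]
  have hsumMono : ∀ x, Monotone fun t => ∑ i ∈ Finset.range t, (a (x, i) t : ℝ≥0) / 2 ^ t :=
    fun x s t hst => (Finset.sum_le_sum fun i _ => hmono (x, i) hst).trans
      (Finset.sum_le_sum_of_subset (Finset.range_mono hst))
  refine ⟨fun x t => ∑ i ∈ Finset.range t, a (x, i) t, ?_, fun x => ?_, fun x => ?_⟩
  · exact (computable_sum_range (α := α × ℕ) (f := fun x i => a (x.1, i) x.2)
      (ha.comp ((Computable.fst.comp Computable.fst).pair Computable.snd)
        (Computable.snd.comp Computable.fst))).comp Computable.id Computable.snd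
  · simpa only [hcast] using hsumMono x
  · simp only [hcast]
    refine tendsto_atTop_isLUB (hsumMono x) ⟨?_, fun B hB => ?_⟩
    · rintro _ ⟨t, rfl⟩
      exact (Finset.sum_le_sum fun i _ => hle x i t).trans ((hsum x).sum_le_tsum _ (by simp))
    · refine NNReal.tsum_le_of_sum_range_le fun n => ?_
      refine le_of_tendsto (tendsto_finsetSum _ fun i _ => hlim (x, i)) ?_
      filter_upwards [eventually_ge_atTop n] with t ht
      exact (Finset.sum_le_sum_of_subset (Finset.range_mono ht)).trans (hB ⟨t, rfl⟩)

theorem extend_encode {f : α → β → ℝ≥0} (hf : IsLeftCE fun x : α × β => f x.1 x.2) :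
    IsLeftCE fun x : α × ℕ => Function.extend encode (f x.1) 0 x.2 := by
  obtain ⟨a, ha, hmono, hlim⟩ := hf
  have hval : ∀ x j t, Function.extend encode (fun b => a (x, b) t) 0 j =
      ((decode (α := β) j).bind fun b =>
        if encode b = j then some (a (x, b) t) else none).getD 0 := by
    intro x j t
    by_cases hj : ∃ b : β, encode b = j
    · obtain ⟨b, rfl⟩ := hj
      simp [encode_injective.extend_apply]
    · rw [Function.extend_apply' _ _ _ hj]
      cases hdec : decode (α := β) j with
      | none => rfl
      | some b => simp [show encode b ≠ j from fun h => hj ⟨b, h⟩]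
  refine ⟨fun x t => Function.extend encode (fun b => a (x.1, b) t) 0 x.2, ?_, ?_, ?_⟩
  · simp only [hval]
    have hx : Computable fun y : ((α × ℕ) × ℕ) × β => y.1.1 := Computable.fst.comp Computable.fst
    exact Computable.option_getD (Computable.option_bind
      (Computable.decode.comp (Computable.snd.comp Computable.fst))
      (computable_ite (computablePred_comp₂ Primrec.eq (Computable.encode.comp Computable.snd)
          (Computable.snd.comp hx))
        (Computable.option_some.comp (ha.comp ((Computable.fst.comp hx).pair Computable.snd)
          (Computable.snd.comp Computable.fst)))
        (Computable.const none)).to₂) (Computable.const 0)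
  · rintro ⟨x, j⟩
    by_cases hj : ∃ b : β, encode b = j
    · obtain ⟨b, rfl⟩ := hj
      simpa only [encode_injective.extend_apply] using hmono (x, b)
    · simpa [Function.extend_apply' _ _ _ hj] using monotone_const
  · rintro ⟨x, j⟩
    by_cases hj : ∃ b : β, encode b = j
    · obtain ⟨b, rfl⟩ := hj
      simpa only [encode_injective.extend_apply] using hlim (x, b)
    · simp [Function.extend_apply' _ _ _ hj]

theorem tsum {f : α → β → ℝ≥0} (hf : IsLeftCE fun x : α × β => f x.1 x.2)
    (hsum : ∀ x, Summable (f x)) : IsLeftCE fun x => ∑' b, f x b := by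
  simpa only [tsum_extend_zero encode_injective] using
    tsum_nat hf.extend_encode fun x => (summable_extend_zero encode_injective).2 (hsum x)

theorem two_rpow {q : ℚ} (hq : 0 ≤ q) : IsLeftCE fun n : ℕ => (2 : ℝ≥0) ^ ((q : ℝ) * n) := by
  refine of_floor (u := fun n _ => (2 : ℝ≥0) ^ ((q : ℝ) * n)) (fun _ => monotone_const)
    (fun _ => tendsto_const_nhds) (computable_of_computablePred_graph ?_)
  have hexp : Computable fun x : (ℕ × ℕ) × ℕ =>
      2 ^ (q.num.natAbs * x.1.1 + q.den * x.1.2) :=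
    (primrec_pow.comp (Primrec.const 2) (Primrec.nat_add.comp
      (Primrec.nat_mul.comp (Primrec.const _) (Primrec.fst.comp Primrec.fst))
      (Primrec.nat_mul.comp (Primrec.const _) (Primrec.snd.comp Primrec.fst)))).to_comp
  -- Raising to the power `q.den` turns the two inequalities that characterize the floor `m` into
  -- inequalities between natural numbers.
  have hroot : ∀ n t : ℕ, ((2 : ℝ≥0) ^ ((q : ℝ) * n) * 2 ^ t) ^ q.den =
      (2 ^ (q.num.natAbs * n + q.den * t) : ℕ) := by
    intro n t
    have hq' : (q : ℝ) * q.den = q.num.natAbs := by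
      rw [Nat.cast_natAbs, abs_of_nonneg (Rat.num_nonneg.2 hq)]
      exact_mod_cast Rat.mul_den_eq_num q
    rw [mul_pow, ← NNReal.rpow_mul_natCast, mul_right_comm, hq', pow_add, ← Nat.cast_mul,
      NNReal.rpow_natCast, ← pow_mul, mul_comm t]
    norm_cast
  refine (computablePred_and (computablePred_comp₂ Primrec.nat_le
    (primrec_pow.to_comp.comp Computable.snd (Computable.const q.den)) hexp)
    (computablePred_comp₂ Primrec.nat_lt hexp (primrec_pow.to_comp.comp
      (Computable.succ.comp Computable.snd) (Computable.const q.den)))).of_eq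
    fun ⟨⟨n, t⟩, m⟩ => ?_
  change m ^ q.den ≤ 2 ^ (q.num.natAbs * n + q.den * t) ∧
    2 ^ (q.num.natAbs * n + q.den * t) < (m + 1) ^ q.den ↔
      ⌊(2 : ℝ≥0) ^ ((q : ℝ) * n) * 2 ^ t⌋₊ = m
  rw [Nat.floor_eq_iff zero_le, ← pow_le_pow_iff_left₀ (b := _ * _) zero_le zero_le q.den_ne_zero,
    ← pow_lt_pow_iff_left₀ (a := _ * _) zero_le zero_le q.den_ne_zero, hroot]
  norm_cast

theorem ceValues {d : Str → ℝ≥0} (hd : IsLeftCE d) : CEValues d := by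
  obtain ⟨a, ha, hmono, hlim⟩ := hd
  refine ⟨fun x => a x.1 x.2 / 2 ^ x.2, computable_dyadic_rat.comp ha Computable.snd,
    fun σ s t hst => ?_, fun σ => ?_⟩
  · have hle : (((a σ s / 2 ^ s : ℚ) : ℝ) ≤ (a σ t / 2 ^ t : ℚ)) := by
      simpa using NNReal.coe_le_coe.2 (hmono σ hst)
    exact_mod_cast hle
  · simpa using NNReal.tendsto_coe.2 (hlim σ)

end IsLeftCE

end LeftCE

section Strings

theorem length_pre (A : Seq) (n : ℕ) : (pre A n).length = n := by
  simp [pre]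

theorem pre_succ (A : Seq) (n : ℕ) : pre A (n + 1) = pre A n ++ [A n] := by
  rw [pre, List.ofFn_succ', List.concat_eq_append]
  rfl

theorem mem_cyl_append_singleton {A : Seq} {σ : Str} {b : Bool} :
    A ∈ cyl (σ ++ [b]) ↔ A ∈ cyl σ ∧ A σ.length = b := by
  simp only [cyl, Set.mem_ofPred_eq, List.length_append, List.length_singleton, pre_succ]
  exact ⟨fun h => by simpa using List.append_inj' h rfl, fun ⟨h, hb⟩ => by rw [h, hb]⟩

/-- The sequence `τ000…`, a computable representative of the cylinder `[τ]`. -/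
def zeroPad (τ : Str) : Seq := fun i => τ.getD i false

theorem zeroPad_mem_cyl (τ : Str) : zeroPad τ ∈ cyl τ :=
  List.ext_getElem (length_pre _ _) fun i _ hi => by simp [pre, zeroPad]

theorem primrecRel_zeroPad_mem_cyl : PrimrecRel fun τ σ : Str => zeroPad τ ∈ cyl σ := by
  have hpre : Primrec₂ fun (τ : Str) (n : ℕ) => (List.range n).map fun i => τ.getD i false :=
    Primrec.list_map (Primrec.list_range.comp Primrec.snd)
      ((Primrec.list_getD false).comp (Primrec.fst.comp Primrec.fst) Primrec.snd)
  refine (Primrec.eq.comp (hpre.comp Primrec.fst (Primrec.list_length.comp Primrec.snd))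
    Primrec.snd).of_eq fun ⟨τ, σ⟩ => ?_
  have hpad : pre (zeroPad τ) σ.length = (List.range σ.length).map fun i => τ.getD i false :=
    List.ext_getElem (by simp [pre]) fun i _ _ => by simp [pre, zeroPad]
  rw [← hpad]
  rfl

/-- The binary strings of length `n`. -/
def strings (n : ℕ) : Finset Str := Finset.univ.image (List.ofFn : (Fin n → Bool) → Str)

theorem mem_strings {n : ℕ} {σ : Str} : σ ∈ strings n ↔ σ.length = n := by
  simp only [strings, Finset.mem_image, Finset.mem_univ, true_and]
  constructor
  · rintro ⟨x, rfl⟩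
    exact List.length_ofFn
  · rintro rfl
    exact ⟨σ.get, List.ofFn_get σ⟩

theorem card_strings (n : ℕ) : (strings n).card = 2 ^ n := by
  simp [strings, Finset.card_image_of_injective _ List.ofFn_injective]

theorem sum_strings_succ {R : Type*} [AddCommMonoid R] (f : Str → R) (n : ℕ) :
    ∑ σ ∈ strings (n + 1), f σ = ∑ σ ∈ strings n, (f (σ ++ [false]) + f (σ ++ [true])) := by
  have hsnoc (x : Fin n → Bool) (b : Bool) :
      List.ofFn (Fin.snoc x b : Fin (n + 1) → Bool) = List.ofFn x ++ [b] := by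
    simp only [List.ofFn_succ', List.concat_eq_append, Fin.snoc_castSucc, Fin.snoc_last]
  simp only [strings, Finset.sum_image List.ofFn_injective.injOn]
  rw [← (Fin.snocEquiv fun _ => Bool).sum_comp, Fintype.sum_prod_type_right]
  simp only [Fintype.sum_bool, add_comm]
  exact Finset.sum_congr rfl fun x _ => congrArg₂ (f · + f ·) (hsnoc x false) (hsnoc x true)

theorem hasSum_length_eq (w : ℕ → ℝ≥0) (n : ℕ) :
    HasSum (fun σ : {σ : Str // σ.length = n} => w σ.1.length) (2 ^ n * w n) := by
  have hsum : ∑ σ ∈ strings n, w σ.length = 2 ^ n * w n := by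
    rw [Finset.sum_congr rfl fun σ hσ => congrArg w (mem_strings.1 hσ), Finset.sum_const,
      card_strings, nsmul_eq_mul, Nat.cast_pow, Nat.cast_ofNat]
  rw [← hsum, ← (Equiv.subtypeEquivRight fun σ : Str => mem_strings (n := n)).hasSum_iff]
  exact (strings n).hasSum fun σ => w σ.length

theorem summable_comp_length {w : ℕ → ℝ≥0} (hw : Summable fun n => 2 ^ n * w n) :
    Summable fun σ : Str => w σ.length := by
  rw [← (Equiv.sigmaFiberEquiv (List.length : Str → ℕ)).summable_iff, NNReal.summable_sigma]
  exact ⟨fun n => (hasSum_length_eq w n).summable,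
    hw.congr fun n => (hasSum_length_eq w n).tsum_eq.symm⟩

end Strings

section MachineGale

open Filter Topology

/-- The weight given to the program `p` when the computations of a machine are combined into a
gale. The factor `(|p| + 1)⁻²` makes the weights of all programs, not only those in a prefix-free
set, summable. -/
noncomputable def weight (p : Str) : ℝ≥0 := ((2 ^ p.length * (p.length + 1) ^ 2 : ℕ) : ℝ≥0)⁻¹

theorem summable_weight : Summable weight := by
  have hsq : Summable fun n : ℕ => (((n + 1 : ℕ) : ℝ≥0) ^ 2)⁻¹ :=
    (NNReal.summable_nat_add_iff (f := fun n : ℕ => ((n : ℝ≥0) ^ 2)⁻¹) 1).2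
      (NNReal.summable_coe.1 (by push_cast; exact Real.summable_nat_pow_inv.2 one_lt_two))
  refine summable_comp_length (w := fun n => ((2 ^ n * (n + 1) ^ 2 : ℕ) : ℝ≥0)⁻¹)
    (hsq.congr fun n => ?_)
  push_cast
  rw [mul_inv, mul_inv_cancel_left₀ (by positivity)]

/-- The mass of the cylinder `[σ]` under the measure `∑ weight p • δ`, where `p` runs over the
domain of `M` and `δ` is the point mass at `zeroPad (M p)`. -/
noncomputable def mass (M : Str →. Str) (σ : Str) : ℝ≥0 :=
  ∑' p, if ∃ τ ∈ M p, zeroPad τ ∈ cyl σ then weight p else 0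

theorem summable_mass (M : Str →. Str) (σ : Str) :
    Summable fun p => if ∃ τ ∈ M p, zeroPad τ ∈ cyl σ then weight p else 0 :=
  NNReal.summable_of_le (fun p => by split_ifs <;> simp) summable_weight

theorem mass_append_add_mass_append (M : Str →. Str) (σ : Str) :
    mass M (σ ++ [false]) + mass M (σ ++ [true]) = mass M σ := by
  rw [mass, mass, ← (summable_mass M _).tsum_add (summable_mass M _), mass]
  refine tsum_congr fun p => ?_
  simp only [mem_cyl_append_singleton]
  by_cases hp : ∃ τ, τ ∈ M p
  · obtain ⟨τ, hτ⟩ := hp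
    simp only [Part.eq_some_iff.2 hτ, Part.mem_some_iff, exists_eq_left]
    cases zeroPad τ σ.length <;> simp
  · simp only [not_exists] at hp
    simp [hp]

theorem weight_le_mass {M : Str →. Str} {p τ : Str} (h : τ ∈ M p) : weight p ≤ mass M τ := by
  have := (summable_mass M τ).le_tsum p fun _ _ => zero_le
  rwa [if_pos ⟨τ, h, zeroPad_mem_cyl τ⟩] at this

theorem isLeftCE_mass {M : Str →. Str} (hM : IsMachine M) : IsLeftCE (mass M) := by
  have hP : REPred fun x : Str × Str => ∃ τ ∈ M x.2, zeroPad τ ∈ cyl x.1 :=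
    rePred_exists_mem (hM.comp Computable.snd) (computablePred_comp₂
      (R := fun τ σ : Str => zeroPad τ ∈ cyl σ) primrecRel_zeroPad_mem_cyl
      Computable.snd (Computable.fst.comp Computable.fst))
  have hlen : Computable fun x : Str × Str => x.2.length :=
    Computable.list_length.comp Computable.snd
  exact (IsLeftCE.inv_of_rePred hP (Primrec.nat_mul.to_comp.comp
    (primrec_pow.to_comp.comp (Computable.const 2) hlen)
    (primrec_pow.to_comp.comp (Computable.succ.comp hlen) (Computable.const 2)))).tsum
    (summable_mass M)

/-- The `s`-gale induced by the machine `M`, obtained by rescaling `mass M`. -/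
noncomputable def machineGale (M : Str →. Str) (s : ℝ) (σ : Str) : ℝ≥0 :=
  2 ^ (s * σ.length) * mass M σ

theorem isGale_machineGale (M : Str →. Str) (s : ℝ) : IsGale s (machineGale M s) := by
  intro σ
  simp only [machineGale, List.length_append, List.length_singleton, ← NNReal.coe_add,
    ← mul_add, mass_append_add_mass_append]
  push_cast
  rw [← mul_assoc, ← Real.rpow_add two_pos]
  ring_nf

theorem ceValues_machineGale {M : Str →. Str} (hM : IsMachine M) {q : ℚ} (hq : 0 ≤ q) :
    CEValues (machineGale M q) :=
  (((IsLeftCE.two_rpow hq).comp Computable.list_length).mul (isLeftCE_mass hM)).ceValues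

theorem exists_mem_length_eq_cplx {M : Str →. Str} {τ : Str} (h : Cplx M τ ≠ ⊤) :
    ∃ p, τ ∈ M p ∧ (p.length : ℕ∞) = Cplx M τ := by
  have hne : ((fun σ : Str => (σ.length : ℕ∞)) '' {σ | τ ∈ M σ}).Nonempty := by
    by_contra! hempty
    exact h (by rw [Cplx, hempty, sInf_empty])
  exact csInf_mem hne

theorem tendsto_pow_div_sq_atTop {b c : ℝ} (hb : 1 < b) (hc : 0 < c) :
    Tendsto (fun n : ℕ => b ^ n / (c * n) ^ 2) atTop atTop := by
  have hlim : Tendsto (fun n : ℕ => c ^ 2 * ((n : ℝ) ^ 2 / b ^ n)) atTop (𝓝 0) := by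
    simpa using (tendsto_pow_const_div_const_pow_of_one_lt 2 hb).const_mul (c ^ 2)
  have hpos : ∀ᶠ n : ℕ in atTop, 0 < c ^ 2 * ((n : ℝ) ^ 2 / b ^ n) := by
    filter_upwards [eventually_ge_atTop 1] with n hn
    positivity
  refine (tendsto_nhdsWithin_iff.2 ⟨hlim, hpos⟩).inv_tendsto_nhdsGT_zero.congr fun n => ?_
  rw [Pi.inv_apply, ← mul_div_assoc, inv_div, mul_pow]

theorem inv_le_weight {p : Str} {r : ℝ} {n : ℕ} (hn : 1 ≤ n) (hp : p.length ≤ r * n) :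
    (2 ^ (r * n) * ((r + 1) * n) ^ 2)⁻¹ ≤ (weight p : ℝ) := by
  have hn' : (1 : ℝ) ≤ n := by exact_mod_cast hn
  rw [weight]
  push_cast
  rw [← Real.rpow_natCast 2 p.length]
  gcongr
  · exact one_le_two
  · linarith

theorem le_machineGale {M : Str →. Str} {p τ : Str} (h : τ ∈ M p) {r : ℝ} (s : ℝ)
    (hτ : 1 ≤ τ.length) (hp : p.length ≤ r * τ.length) :
    (2 ^ (s - r)) ^ τ.length / ((r + 1) * τ.length) ^ 2 ≤ (machineGale M s τ : ℝ) := by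
  calc ((2 : ℝ) ^ (s - r)) ^ τ.length / ((r + 1) * τ.length) ^ 2
      = 2 ^ (s * τ.length) * (2 ^ (r * τ.length) * ((r + 1) * τ.length) ^ 2)⁻¹ := by
        rw [← Real.rpow_mul_natCast two_pos.le, sub_mul, Real.rpow_sub two_pos, mul_inv,
          div_div, div_eq_mul_inv, mul_inv]
    _ ≤ 2 ^ (s * τ.length) * mass M τ := by
        gcongr
        exact (inv_le_weight hτ hp).trans (weight_le_mass h)
    _ = machineGale M s τ := by simp [machineGale]

theorem succeeds_machineGale {M : Str →. Str} {A : Seq} {r s : ℝ} (hr : 0 ≤ r) (hrs : r < s)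
    (hA : ∃ᶠ n : ℕ in atTop, ∃ p, pre A n ∈ M p ∧ p.length ≤ r * n) :
    Succeeds (machineGale M s) A := by
  refine ENNReal.eq_top_of_forall_nnreal_le fun K => Filter.le_limsup_of_frequently_le ?_
  have hlarge := (tendsto_pow_div_sq_atTop (Real.one_lt_rpow one_lt_two (sub_pos.2 hrs))
    (show 0 < r + 1 by linarith)).eventually_ge_atTop (K : ℝ)
  refine (hA.and_eventually (hlarge.and (eventually_ge_atTop 1))).mono ?_
  rintro n ⟨⟨p, hp, hlen⟩, hK, hn⟩
  have hgale := le_machineGale hp s (by rwa [length_pre]) (by rwa [length_pre])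
  rw [length_pre] at hgale
  exact_mod_cast hK.trans hgale

end MachineGale

section Enumeration

open Encodable

theorem count_isSome_lt {β : Type*} {s : ℕ → Option β}
    (hs : ∀ b m n, s m = some b → s n = some b → m = n) {N : ℕ}
    (hN : {b | ∃ m, s m = some b}.encard ≤ N) {m : ℕ} (hm : (s m).isSome) :
    Nat.count (fun i => (s i).isSome) m < N := by
  have hsome {i} (hi : (s i).isSome) : s i = some ((s i).get hi) := (Option.some_get hi).symm
  have hcard : {i | (s i).isSome}.encard ≤ N := by
    refine le_trans ?_ hN
    rw [← (Option.some_injective β).encard_image, ← Set.InjOn.encard_image (f := s)]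
    · refine Set.encard_le_encard ?_
      rintro _ ⟨i, hi, rfl⟩
      exact ⟨_, ⟨i, hsome hi⟩, (hsome hi).symm⟩
    · exact fun i hi j _ hij => hs _ i j (hsome hi) (hij ▸ hsome hi)
  have hfin : {i | (s i).isSome}.Finite := Set.finite_of_encard_le_coe hcard
  rw [hfin.encard_eq_coe_toFinset_card, Nat.cast_le] at hcard
  exact (Nat.count_lt_card hfin hm).trans_le hcard

variable {α β : Type*} [Primcodable α] [Primcodable β]

theorem exists_injective_enumeration {P : α → β → Prop} (hP : REPred fun x : α × β => P x.1 x.2) :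
    ∃ s : α → ℕ → Option β, Computable₂ s ∧ (∀ a b, P a b ↔ ∃ m, s a m = some b) ∧
      ∀ a b m n, s a m = some b → s a n = some b → m = n := by
  obtain ⟨R, hR, -, hPR⟩ := exists_monotone_computablePred_of_rePred hP
  -- `b` is listed only at the code of `(b, t)` for the first stage `t` that witnesses `P a b`.
  let s (a : α) (m : ℕ) : Option β := (decode₂ (β × ℕ) m).bind fun x =>
    if R (a, x.1) x.2 ∧ Nat.count (R (a, x.1)) x.2 = 0 then some x.1 else none
  have hs {a b m} : s a m = some b ↔
      ∃ t, encode (b, t) = m ∧ R (a, b) t ∧ Nat.count (R (a, b)) t = 0 := by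
    simp [s, Option.bind_eq_some_iff, decode₂_eq_some, and_comm, and_left_comm]
  refine ⟨s, ?_, fun a b => ⟨fun h => ?_, fun ⟨m, hm⟩ => ?_⟩, fun a b m n hm hn => ?_⟩
  · have hpair : Computable fun y : (α × ℕ) × (β × ℕ) => ((y.1.1, y.2.1), y.2.2) :=
      ((Computable.fst.comp Computable.fst).pair (Computable.fst.comp Computable.snd)).pair
        (Computable.snd.comp Computable.snd)
    have hcount : ComputablePred fun x : (α × β) × ℕ => Nat.count (R x.1) x.2 = 0 :=
      computablePred_comp₂ Primrec.eq (computable_count hR) (Computable.const 0)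
    exact Computable.option_bind (Primrec.decode₂.to_comp.comp Computable.snd)
      (computable_ite (computablePred_comp (computablePred_and hR hcount) hpair)
        (Computable.option_some.comp (Computable.fst.comp Computable.snd))
        (Computable.const none)).to₂
  · have hex : ∃ t, R (a, b) t := (hPR (a, b)).1 h
    exact ⟨_, hs.2 ⟨Nat.find hex, rfl, Nat.find_spec hex,
      Nat.count_iff_forall_not.2 fun _ => Nat.find_min hex⟩⟩
  · obtain ⟨t, -, ht, -⟩ := hs.1 hm
    exact (hPR (a, b)).2 ⟨t, ht⟩
  · obtain ⟨t, rfl, ht, ht0⟩ := hs.1 hm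
    obtain ⟨u, rfl, hu, hu0⟩ := hs.1 hn
    rw [Nat.count_injective ht hu (ht0.trans hu0.symm)]

theorem exists_partrec_enumeration {P : α → β → Prop} (hP : REPred fun x : α × β => P x.1 x.2) :
    ∃ E : α × ℕ →. β, Partrec E ∧
      ∀ a (N : ℕ), {b | P a b}.encard ≤ N → ∀ b, P a b → ∃ i < N, b ∈ E (a, i) := by
  obtain ⟨s, hs, hPs, hinj⟩ := exists_injective_enumeration hP
  have hcount : Computable₂ fun a m => Nat.count (fun i => (s a i).isSome) m :=
    computable_count (P := fun a i => (s a i).isSome)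
      ((Primrec.option_isSome.to_comp.comp hs).of_eq
        fun _ => (Bool.decide_coe _).symm).computablePred
  refine ⟨fun x => Nat.rfindOpt fun m =>
    if Nat.count (fun i => (s x.1 i).isSome) m = x.2 then s x.1 m else none,
    Partrec.rfindOpt ?_, fun a N hN b hb => ?_⟩
  · exact computable_ite (computablePred_comp₂ Primrec.eq
      (hcount.comp (Computable.fst.comp Computable.fst) Computable.snd)
      (Computable.snd.comp Computable.fst))
      (hs.comp (Computable.fst.comp Computable.fst) Computable.snd) (Computable.const none)
  · obtain ⟨m, hm⟩ := (hPs a b).1 hb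
    simp only [hPs] at hN
    refine ⟨_, count_isSome_lt (hinj a) hN (Option.isSome_of_mem hm), ?_⟩
    refine mem_rfindOpt ⟨m, by simpa using hm⟩ fun n c hc => ?_
    obtain ⟨hmn, hn⟩ := Option.ite_none_right_eq_some.1 hc
    obtain rfl := Nat.count_injective (Option.isSome_of_mem hn) (Option.isSome_of_mem hm) hmn
    exact Option.some.inj (hn.symm.trans hm)

end Enumeration

section PrefixFreeCoding

/-- The natural number with binary expansion `w`, least significant bit first. -/
def binVal (w : Str) : ℕ := w.foldr Nat.bit 0

theorem primrec_binVal : Primrec binVal :=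
  Primrec.list_foldr (h := fun _ x => Nat.bit x.1 x.2) Primrec.id (Primrec.const 0)
    ((Primrec.cond Primrec.fst (Primrec.nat_double_succ.comp Primrec.snd)
      (Primrec.nat_double.comp Primrec.snd)).comp Primrec.snd).to₂

theorem exists_binVal_eq {ℓ i : ℕ} (hi : i < 2 ^ ℓ) : ∃ w : Str, w.length = ℓ ∧ binVal w = i := by
  induction ℓ generalizing i with
  | zero => exact ⟨[], rfl, (Nat.lt_one_iff.1 hi).symm⟩
  | succ ℓ ih =>
    obtain ⟨w, hw, hv⟩ := ih (i := i.div2) (by rw [Nat.div2_val]; omega)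
    refine ⟨i.bodd :: w, by rw [List.length_cons, hw], ?_⟩
    calc binVal (i.bodd :: w) = Nat.bit i.bodd (binVal w) := rfl
      _ = i := by rw [hv, Nat.bit_bodd_div2]

/-- The machine which maps `0ᵏ1w`, where `w` has the length `f k` determined by `k`, to the `i`-th
element of the `k`-th set enumerated by `E`, where `i` is the number with binary expansion `w`. -/
def blockMachine (E : ℕ × ℕ →. Str) (f : ℕ → ℕ) : Str →. Str := fun x =>
  Part.assert (x.length = x.idxOf true + 1 + f (x.idxOf true)) fun _ =>
    E (x.idxOf true, binVal (x.drop (x.idxOf true + 1)))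

theorem prefixFree_length_eq (f : ℕ → ℕ) :
    PrefixFree {x : Str | x.length = x.idxOf true + 1 + f (x.idxOf true)} := by
  rintro x hx y hy ⟨z, rfl⟩
  simp only [Set.mem_ofPred_eq] at hx hy
  have hmem : true ∈ x := List.idxOf_lt_length_iff.1 (by omega)
  rw [List.idxOf_append_of_mem hmem, ← hx, List.length_append] at hy
  rw [List.length_eq_zero_iff.1 (show z.length = 0 by omega), List.append_nil]

theorem prefixFreeMachine_blockMachine {E : ℕ × ℕ →. Str} (hE : Partrec E) {f : ℕ → ℕ}
    (hf : Computable f) : PrefixFreeMachine (blockMachine E f) := by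
  refine ⟨?_, fun x hx y hy => prefixFree_length_eq f x hx.1 y hy.1⟩
  have hidx : Computable fun x : Str => x.idxOf true :=
    Primrec.list_idxOf.to_comp.comp (Computable.const true) Computable.id
  have hlen : ComputablePred fun x : Str => x.length = x.idxOf true + 1 + f (x.idxOf true) :=
    computablePred_comp₂ Primrec.eq Computable.list_length
      (Primrec.nat_add.to_comp.comp (Computable.succ.comp hidx) (hf.comp hidx))
  have hrun : Partrec fun x : Str => E (x.idxOf true, binVal (x.drop (x.idxOf true + 1))) :=
    hE.comp (hidx.pair (primrec_binVal.to_comp.comp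
      (Primrec.list_drop.to_comp.comp (Computable.succ.comp hidx) Computable.id)))
  refine (Partrec.bind hlen.to_re (hrun.comp Computable.fst).to₂).of_eq fun x => ?_
  ext σ
  simp [blockMachine, Part.mem_assert_iff]

theorem exists_mem_blockMachine {E : ℕ × ℕ →. Str} {f : ℕ → ℕ} {k i : ℕ} {σ : Str}
    (hi : i < 2 ^ f k) (hσ : σ ∈ E (k, i)) :
    ∃ x, σ ∈ blockMachine E f x ∧ x.length = k + 1 + f k := by
  obtain ⟨w, hw, rfl⟩ := exists_binVal_eq hi
  have hidx : (List.replicate k false ++ true :: w).idxOf true = k := by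
    rw [List.idxOf_append_of_notMem (by simp)]
    simp
  have hlen : (List.replicate k false ++ true :: w).length = k + 1 + f k := by
    simp [hw]
    omega
  refine ⟨_, Part.mem_assert_iff.2 ⟨by rw [hidx, hlen], ?_⟩, hlen⟩
  rw [hidx, List.drop_append]
  simpa using hσ

theorem cplx_le_length {M : Str →. Str} {p τ : Str} (h : τ ∈ M p) : Cplx M τ ≤ p.length :=
  sInf_le ⟨p, h, rfl⟩

/-- `M` describes every string at least as succinctly, up to an additive constant, as any
prefix-free machine does. This is what universal machines and universal prefix-free machines
have in common. -/
def DominatesPrefixFree (M : Str →. Str) : Prop :=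
  ∀ N : Str →. Str, PrefixFreeMachine N → ∃ c : ℕ, ∀ τ, Cplx M τ ≤ Cplx N τ + c

theorem cplx_le_of_encard_le {M : Str →. Str} (hM : DominatesPrefixFree M) {P : Str → Prop}
    (hP : REPred P) {ι : Str → ℕ} (hι : Computable ι) {f : ℕ → ℕ} (hf : Computable f)
    (hcard : ∀ k, {σ | P σ ∧ ι σ = k}.encard ≤ (2 ^ f k : ℕ)) :
    ∃ c : ℕ, ∀ σ, P σ → Cplx M σ ≤ (ι σ + f (ι σ) + c : ℕ) := by
  have hfib : REPred fun x : ℕ × Str => P x.2 ∧ ι x.2 = x.1 := by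
    refine (rePred_exists_mem (p := fun (x : ℕ × Str) _ => ι x.2 = x.1)
      (hP.comp Computable.snd) ?_).of_eq fun x => by simp
    exact computablePred_comp₂ Primrec.eq
      (hι.comp (Computable.snd.comp Computable.fst)) (Computable.fst.comp Computable.fst)
  obtain ⟨E, hE, hmem⟩ := exists_partrec_enumeration (P := fun k σ => P σ ∧ ι σ = k) hfib
  obtain ⟨c, hc⟩ := hM _ (prefixFreeMachine_blockMachine hE hf)
  refine ⟨1 + c, fun σ hσ => (hc σ).trans ?_⟩
  obtain ⟨i, hi, hiE⟩ := hmem _ _ (hcard (ι σ)) σ ⟨hσ, rfl⟩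
  obtain ⟨x, hx, hlen⟩ := exists_mem_blockMachine hi hiE
  refine (add_le_add_left (cplx_le_length hx) _).trans (le_of_eq ?_)
  rw [hlen]
  push_cast
  ring

theorem cplx_le_two_mul_length {M : Str →. Str} (hM : DominatesPrefixFree M) :
    ∃ c : ℕ, ∀ σ, Cplx M σ ≤ (2 * σ.length + c : ℕ) := by
  have hcard (k : ℕ) : {σ : Str | True ∧ σ.length = k}.encard ≤ (2 ^ k : ℕ) := by
    rw [← card_strings, ← Set.encard_coe_eq_coe_finsetCard]
    exact Set.encard_le_encard fun σ hσ => mem_strings.2 hσ.2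
  obtain ⟨c, hc⟩ := cplx_le_of_encard_le hM (Computable.const true).computablePred.to_re
    Computable.list_length Computable.id hcard
  exact ⟨c, fun σ => by simpa [two_mul] using hc σ trivial⟩

end PrefixFreeCoding

section Gales

theorem IsGale.append_add_append {s : ℝ} {d : Str → ℝ≥0} (hd : IsGale s d) (σ : Str) :
    (d (σ ++ [false]) + d (σ ++ [true]) : ℝ) = 2 ^ s * d σ := by
  rw [hd σ, ← mul_assoc, ← Real.rpow_add two_pos, add_neg_cancel, Real.rpow_zero, one_mul]

theorem IsGale.sum_strings {s : ℝ} {d : Str → ℝ≥0} (hd : IsGale s d) (n : ℕ) :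
    ∑ σ ∈ strings n, (d σ : ℝ) = 2 ^ (s * n) * d [] := by
  induction n with
  | zero => simp [strings]
  | succ n ih =>
    calc ∑ σ ∈ strings (n + 1), (d σ : ℝ)
        = ∑ σ ∈ strings n, 2 ^ s * (d σ : ℝ) := by
          rw [sum_strings_succ]
          exact Finset.sum_congr rfl fun σ _ => hd.append_add_append σ
      _ = 2 ^ (s * (n + 1 : ℕ)) * d [] := by
          rw [← Finset.mul_sum, ih, ← mul_assoc, ← Real.rpow_add two_pos]
          push_cast
          ring_nf

theorem IsGale.card_filter_one_lt_le {s : ℝ} {d : Str → ℝ≥0} (hd : IsGale s d) (n : ℕ) :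
    (((strings n).filter (1 < d ·)).card : ℝ) ≤ 2 ^ (s * n) * d [] := by
  calc (((strings n).filter (1 < d ·)).card : ℝ)
      = ∑ _σ ∈ (strings n).filter (1 < d ·), (1 : ℝ) := by simp
    _ ≤ ∑ σ ∈ (strings n).filter (1 < d ·), (d σ : ℝ) :=
        Finset.sum_le_sum fun σ hσ => by exact_mod_cast (Finset.mem_filter.1 hσ).2.le
    _ ≤ ∑ σ ∈ strings n, (d σ : ℝ) :=
        Finset.sum_le_sum_of_subset_of_nonneg (Finset.filter_subset _ _)
          fun _ _ _ => NNReal.coe_nonneg _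
    _ = 2 ^ (s * n) * d [] := hd.sum_strings n

theorem IsGale.card_filter_one_lt_le_of_le {s : ℝ} (hs : 0 ≤ s) {d : Str → ℝ≥0} (hd : IsGale s d)
    {L p k r : ℕ} (hp : (p : ℝ) = s * L) (hr : r ≤ L) :
    (((strings (L * k + r)).filter (1 < d ·)).card : ℝ) ≤ 2 ^ (p * k) * (2 ^ p * d []) := by
  have hexp : s * (L * k + r : ℕ) ≤ (p * k + p : ℕ) := by
    have hr' : (r : ℝ) ≤ L := by exact_mod_cast hr
    push_cast
    rw [hp]
    nlinarith
  calc (((strings (L * k + r)).filter (1 < d ·)).card : ℝ)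
      ≤ 2 ^ (s * (L * k + r : ℕ)) * d [] := hd.card_filter_one_lt_le _
    _ ≤ 2 ^ ((p * k + p : ℕ) : ℝ) * d [] := by gcongr; exact one_le_two
    _ = 2 ^ (p * k) * (2 ^ p * d []) := by rw [Real.rpow_natCast, pow_add, mul_assoc]

theorem IsGale.encard_length_div_eq_le {s : ℝ} (hs : 0 ≤ s) {d : Str → ℝ≥0} (hd : IsGale s d)
    {L p : ℕ} (hL : 0 < L) (hp : (p : ℝ) = s * L) :
    ∃ c : ℕ, ∀ k, {σ | 1 < d σ ∧ σ.length / L = k}.encard ≤ (2 ^ (p * k + c) : ℕ) := by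
  obtain ⟨c, hc⟩ := pow_unbounded_of_one_lt ((L : ℝ) * (2 ^ p * d [])) one_lt_two
  refine ⟨c, fun k => ?_⟩
  set S := (Finset.range L).biUnion fun r => (strings (L * k + r)).filter (1 < d ·)
  have hsub : {σ | 1 < d σ ∧ σ.length / L = k} ⊆ S := by
    rintro σ ⟨hσ, rfl⟩
    exact Finset.mem_biUnion.2 ⟨σ.length % L, Finset.mem_range.2 (Nat.mod_lt _ hL),
      Finset.mem_filter.2 ⟨mem_strings.2 (Nat.div_add_mod _ _).symm, hσ⟩⟩
  have hcard : (S.card : ℝ) ≤ 2 ^ (p * k + c) := by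
    calc (S.card : ℝ)
        ≤ ∑ r ∈ Finset.range L, (((strings (L * k + r)).filter (1 < d ·)).card : ℝ) := by
          exact_mod_cast Finset.card_biUnion_le
      _ ≤ L * (2 ^ (p * k) * (2 ^ p * d [])) := by
          simpa using Finset.sum_le_card_nsmul _ _ _ fun r hr =>
            hd.card_filter_one_lt_le_of_le hs (k := k) hp (Finset.mem_range.1 hr).le
      _ = 2 ^ (p * k) * (L * (2 ^ p * d [])) := by ring
      _ ≤ 2 ^ (p * k + c) := by rw [pow_add]; gcongr
  calc {σ | 1 < d σ ∧ σ.length / L = k}.encard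
      ≤ (S : Set Str).encard := Set.encard_le_encard hsub
    _ ≤ (2 ^ (p * k + c) : ℕ) := by
        rw [Set.encard_coe_eq_coe_finsetCard]
        exact_mod_cast hcard

theorem rePred_one_lt {d : Str → ℝ≥0} (hd : CEValues d) : REPred fun σ => 1 < d σ := by
  obtain ⟨g, hg, hmono, hlim⟩ := hd
  refine (rePred_exists_nat (P := fun σ t => 1 < g (σ, t))
    (computablePred_comp computablePred_one_lt_rat hg)).of_eq fun σ => ⟨?_, fun h => ?_⟩
  · rintro ⟨t, ht⟩
    have hle : (g (σ, t) : ℝ) ≤ d σ :=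
      Monotone.ge_of_tendsto (fun i j hij => Rat.cast_mono (hmono σ hij)) (hlim σ) t
    have ht' : (1 : ℝ) < g (σ, t) := by exact_mod_cast ht
    exact_mod_cast ht'.trans_le hle
  · have h' : (1 : ℝ) < d σ := by exact_mod_cast h
    obtain ⟨t, ht⟩ := ((hlim σ).eventually_const_lt h').exists
    exact ⟨t, by exact_mod_cast ht⟩

theorem IsGale.cplx_le {M : Str →. Str} (hM : DominatesPrefixFree M) {s : ℝ} (hs : 0 ≤ s)
    {d : Str → ℝ≥0} (hd : IsGale s d) (hce : CEValues d) {L p : ℕ} (hL : 0 < L)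
    (hp : (p : ℝ) = s * L) :
    ∃ c : ℕ, ∀ σ, 1 < d σ → Cplx M σ ≤ ((p + 1) * (σ.length / L) + c : ℕ) := by
  obtain ⟨b, hb⟩ := hd.encard_length_div_eq_le hs hL hp
  have hdiv : Computable fun σ : Str => σ.length / L :=
    Primrec.nat_div.to_comp.comp Computable.list_length (Computable.const L)
  have hexp : Computable fun k => p * k + b :=
    Primrec.nat_add.to_comp.comp (Primrec.nat_mul.to_comp.comp (Computable.const p) Computable.id)
      (Computable.const b)
  obtain ⟨c, hc⟩ := cplx_le_of_encard_le hM (rePred_one_lt hce) hdiv hexp hb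
  refine ⟨b + c, fun σ hσ => (hc σ hσ).trans (le_of_eq ?_)⟩
  congr 1
  ring

theorem IsGale.toNat_cplx_le {M : Str →. Str} (hM : DominatesPrefixFree M) {q : ℚ} (hq : 0 ≤ q)
    {d : Str → ℝ≥0} (hd : IsGale q d) (hce : CEValues d) {ε : ℝ} (hε : 0 < ε) :
    ∃ c : ℕ, ∀ σ, 1 < d σ → ((Cplx M σ).toNat : ℝ) ≤ (q + ε) * σ.length + c := by
  obtain ⟨m, hm⟩ := exists_nat_one_div_lt hε
  set L := q.den * (m + 1)
  have hL : 0 < L := Nat.mul_pos q.den_pos m.succ_pos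
  have hL' : (L : ℝ) ≠ 0 := by exact_mod_cast hL.ne'
  have hp : ((q.num.natAbs * (m + 1) : ℕ) : ℝ) = q * L := by
    have hnum : ((q.num.natAbs : ℕ) : ℝ) = q * q.den := by
      rw [Nat.cast_natAbs, abs_of_nonneg (Rat.num_nonneg.2 hq)]
      exact_mod_cast (Rat.mul_den_eq_num q).symm
    rw [Nat.cast_mul, hnum, mul_assoc, ← Nat.cast_mul]
  have hLε : 1 / (L : ℝ) ≤ ε := by
    refine le_trans (one_div_le_one_div_of_le (by positivity) ?_) hm.le
    exact_mod_cast Nat.le_mul_of_pos_left (m + 1) q.den_pos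
  obtain ⟨c, hc⟩ := hd.cplx_le hM (by exact_mod_cast hq) hce hL hp
  refine ⟨c, fun σ hσ => ?_⟩
  calc ((Cplx M σ).toNat : ℝ)
      ≤ ((q.num.natAbs * (m + 1) : ℕ) + 1) * (σ.length / L : ℕ) + c := by
        exact_mod_cast ENat.toNat_le_of_le_natCast (hc σ hσ)
    _ ≤ (q * L + 1) * (σ.length / L) + c := by
        rw [hp]
        gcongr
        exact Nat.cast_div_le
    _ = (q + 1 / L) * σ.length + c := by field_simp [hL']
    _ ≤ (q + ε) * σ.length + c := by gcongr

end Gales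

section Dimension

open Filter Topology

theorem frequently_one_lt {d : Str → ℝ≥0} {A : Seq} (hA : Succeeds d A) :
    ∃ᶠ n in atTop, 1 < d (pre A n) := by
  have hlim : (1 : ℝ≥0∞) < limsup (fun n => (d (pre A n) : ℝ≥0∞)) atTop :=
    hA.symm ▸ ENNReal.one_lt_top
  exact (frequently_lt_of_lt_limsup (by isBoundedDefault) hlim).mono fun n hn => by
    exact_mod_cast hn

theorem isBoundedUnder_ge_div (f : ℕ → ℕ) :
    IsBoundedUnder (· ≥ ·) atTop fun n : ℕ => (f n : ℝ) / n :=
  isBoundedUnder_of ⟨0, fun n => by positivity⟩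

theorem liminf_div_le_of_frequently {f : ℕ → ℕ} {a c : ℝ} (h : ∃ᶠ n in atTop, f n ≤ a * n + c) :
    liminf (fun n : ℕ => (f n : ℝ) / n) atTop ≤ a := by
  refine le_of_forall_gt_imp_ge_of_dense fun x hx => ?_
  have hlim : Tendsto (fun n : ℕ => a + c / n) atTop (𝓝 a) := by
    simpa using (tendsto_const_div_atTop_nhds_zero_nat c).const_add a
  refine liminf_le_of_frequently_le ?_ (isBoundedUnder_ge_div f)
  refine (h.and_eventually ((hlim.eventually_le_const hx).and (eventually_ge_atTop 1))).mono ?_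
  rintro n ⟨hfn, hx, hn⟩
  have hn' : (0 : ℝ) < n := by exact_mod_cast hn
  refine le_trans ?_ hx
  rw [div_le_iff₀ hn', add_mul, div_mul_cancel₀ _ hn'.ne']
  exact hfn

theorem isCoboundedUnder_ge_div {f : ℕ → ℕ} {b c : ℕ} (hf : ∀ n, f n ≤ b * n + c) :
    IsCoboundedUnder (· ≥ ·) atTop fun n : ℕ => (f n : ℝ) / n := by
  refine IsBoundedUnder.isCoboundedUnder_ge ⟨b + c, eventually_map.2 ?_⟩
  filter_upwards [eventually_ge_atTop 1] with n hn
  have hn' : (1 : ℝ) ≤ n := by exact_mod_cast hn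
  have hfn : (f n : ℝ) ≤ b * n + c := by exact_mod_cast hf n
  rw [div_le_iff₀ (by linarith)]
  nlinarith [(Nat.cast_nonneg c : (0 : ℝ) ≤ c)]

theorem liminf_cplx_div_le_of_succeeds {M : Str →. Str} (hdom : DominatesPrefixFree M) {q : ℚ}
    (hq : 0 ≤ q) {d : Str → ℝ≥0} (hd : IsGale q d) (hce : CEValues d) {A : Seq}
    (hA : Succeeds d A) :
    liminf (fun n => ((Cplx M (pre A n)).toNat : ℝ) / n) atTop ≤ q := by
  refine le_of_forall_pos_le_add fun ε hε => ?_
  obtain ⟨c, hc⟩ := hd.toNat_cplx_le hdom hq hce hε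
  exact liminf_div_le_of_frequently ((frequently_one_lt hA).mono fun n hn => by
    simpa only [length_pre] using hc _ hn)

theorem exists_gale_succeeds_of_liminf_lt {M : Str →. Str} (hM : IsMachine M)
    (hdom : DominatesPrefixFree M) {A : Seq} {q : ℚ}
    (hq : liminf (fun n => ((Cplx M (pre A n)).toNat : ℝ) / n) atTop < q) :
    0 ≤ q ∧ ∃ d : Str → ℝ≥0, IsGale q d ∧ CEValues d ∧ Succeeds d A := by
  obtain ⟨c, hc⟩ := cplx_le_two_mul_length hdom
  have hcob := isCoboundedUnder_ge_div (f := fun n => (Cplx M (pre A n)).toNat) (b := 2) fun n => by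
    simpa only [length_pre] using ENat.toNat_le_of_le_natCast (hc (pre A n))
  have hnonneg : 0 ≤ liminf (fun n => ((Cplx M (pre A n)).toNat : ℝ) / n) atTop :=
    le_liminf_of_le hcob (Eventually.of_forall fun n => by positivity)
  obtain ⟨r, hr, hrq⟩ := exists_between hq
  have hr0 : 0 ≤ r := hnonneg.trans hr.le
  have hq0 : 0 ≤ q := by exact_mod_cast hr0.trans hrq.le
  refine ⟨hq0, machineGale M q, isGale_machineGale M q, ceValues_machineGale hM hq0,
    succeeds_machineGale hr0 hrq ?_⟩
  refine ((frequently_lt_of_liminf_lt hcob hr).and_eventually (eventually_ge_atTop 1)).mono ?_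
  rintro n ⟨hlt, hn⟩
  obtain ⟨p, hp, hlen⟩ := exists_mem_length_eq_cplx
    (ne_top_of_le_ne_top (ENat.natCast_ne_top _) (hc (pre A n)))
  rw [div_lt_iff₀ (by exact_mod_cast hn), ← hlen, ENat.toNat_natCast] at hlt
  exact ⟨p, hp, hlt.le⟩

theorem effDim_le {A : Seq} {q : ℚ} (hq : 0 ≤ q)
    (h : ∃ d : Str → ℝ≥0, IsGale q d ∧ CEValues d ∧ Succeeds d A) : effDim A ≤ q := by
  refine csInf_le ⟨0, ?_⟩ ⟨q, hq, rfl, h⟩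
  rintro _ ⟨p, hp, rfl, -⟩
  exact_mod_cast hp

theorem mayordomo_general {M : Str →. Str} (hM : IsMachine M) (hdom : DominatesPrefixFree M)
    (A : Seq) :
    effDim A = liminf (fun n => ((Cplx M (pre A n)).toNat : ℝ) / n) atTop := by
  refine le_antisymm (le_of_forall_gt_imp_ge_of_dense fun x hx => ?_) (le_csInf ?_ ?_)
  · obtain ⟨q, hq, hqx⟩ := exists_rat_btwn hx
    obtain ⟨hq0, hgale⟩ := exists_gale_succeeds_of_liminf_lt hM hdom hq
    exact (effDim_le hq0 hgale).trans hqx.le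
  · obtain ⟨q, hq⟩ := exists_rat_gt
      (liminf (fun n => ((Cplx M (pre A n)).toNat : ℝ) / n) atTop)
    obtain ⟨hq0, hgale⟩ := exists_gale_succeeds_of_liminf_lt hM hdom hq
    exact ⟨q, q, hq0, rfl, hgale⟩
  · rintro _ ⟨q, hq, rfl, d, hd, hce, hA⟩
    exact liminf_cplx_div_le_of_succeeds hdom hq hd hce hA

end Dimension

/-- **Mayordomo's theorem**: for every `A ∈ 2^ω`,
`dim(A) = liminf_n K(A↾n)/n = liminf_n C(A↾n)/n`. -/
theorem mayordomo (UK : Str →. Str) (hUK : UniversalPFMachine UK)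
    (UC : Str →. Str) (hUC : UniversalMachine UC) (A : Seq) :
    effDim A =
        Filter.liminf (fun n : ℕ => ((Cplx UK (pre A n)).toNat : ℝ) / n) Filter.atTop ∧
      effDim A =
        Filter.liminf (fun n : ℕ => ((Cplx UC (pre A n)).toNat : ℝ) / n) Filter.atTop :=
  ⟨mayordomo_general hUK.1.1 hUK.2 A, mayordomo_general hUC.1 (fun N hN => hUC.2 N hN.1) A⟩

end AR
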